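/- Let X ⊂ ℝ^d be a finite dataset and let S be the set of k centers returned by δ-k-means++ (first center uniform from X, each subsequent center sampled from the distribution (1-δ)·Δ(x,S)/Δ(X,S) + δ/|X|), for δ ∈ (0, 1/2). Then E[Δ(X,S)] ≤ 8(ln k + 2)·Δ_k(X) + (6kδ/(1-δ))·Δ₁(X). -/

import Mathlib

/-- Squared distance from `x` to the nearest center in the list `S`. -/
noncomputable def ptCost {d : ℕ} (x : EuclideanSpace ℝ (Fin d))
    (S : List (EuclideanSpace ℝ (Fin d))) : ℝ :=
  sInf ((fun c => ‖x - c‖ ^ 2) '' {c | c ∈ S})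

/-- Total clustering cost `Δ(X,S) = Σ_{x∈X} min_{c∈S} ‖x-c‖²`. -/
noncomputable def setCost {d : ℕ} (X : Finset (EuclideanSpace ℝ (Fin d)))
    (S : List (EuclideanSpace ℝ (Fin d))) : ℝ :=
  ∑ x ∈ X, ptCost x S

/-- `δ`-perturbed `D²` sampling weight:
`(1-δ)·Δ(x,S)/Δ(X,S) + δ/|X|`. -/
noncomputable def stepWeight {d : ℕ} (X : Finset (EuclideanSpace ℝ (Fin d))) (δ : ℝ)
    (S : List (EuclideanSpace ℝ (Fin d))) (x : EuclideanSpace ℝ (Fin d)) : ℝ :=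
  (1 - δ) * ptCost x S / setCost X S + δ / (X.card : ℝ)

/-- Expected final cost of `δ`-`k`-means++ after `t` further sampling steps
starting from the current list of centers. -/
noncomputable def expCost {d : ℕ} (X : Finset (EuclideanSpace ℝ (Fin d))) (δ : ℝ) :
    ℕ → List (EuclideanSpace ℝ (Fin d)) → ℝ
  | 0, S => setCost X S
  | t + 1, S => ∑ x ∈ X, stepWeight X δ S x * expCost X δ t (x :: S)

/-- Optimal `k`-means cost `Δ_k(X)`. -/
noncomputable def optCost {d : ℕ} (X : Finset (EuclideanSpace ℝ (Fin d))) (k : ℕ) : ℝ :=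
  sInf {r | ∃ C : Finset (EuclideanSpace ℝ (Fin d)),
    C.Nonempty ∧ C.card = k ∧ r = setCost X C.toList}

section

variable {d : ℕ} {ι : Type*} [DecidableEq ι]

theorem ptCost_nonneg (x : EuclideanSpace ℝ (Fin d)) (S : List (EuclideanSpace ℝ (Fin d))) :
    0 ≤ ptCost x S := by
  refine Real.sInf_nonneg ?_
  rintro _ ⟨c, -, rfl⟩
  positivity

theorem bddBelow_sqDist (x : EuclideanSpace ℝ (Fin d)) (S : List (EuclideanSpace ℝ (Fin d))) :
    BddBelow ((fun c => ‖x - c‖ ^ 2) '' {c | c ∈ S}) := by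
  refine ⟨0, ?_⟩
  rintro _ ⟨c, -, rfl⟩
  positivity

theorem ptCost_le {x c : EuclideanSpace ℝ (Fin d)} {S : List (EuclideanSpace ℝ (Fin d))}
    (hc : c ∈ S) : ptCost x S ≤ ‖x - c‖ ^ 2 :=
  csInf_le (bddBelow_sqDist x S) ⟨c, hc, rfl⟩

theorem exists_ptCost_eq (x : EuclideanSpace ℝ (Fin d)) {S : List (EuclideanSpace ℝ (Fin d))}
    (hS : S ≠ []) :
    ∃ c ∈ S, ptCost x S = ‖x - c‖ ^ 2 := by
  obtain ⟨a, ha⟩ := List.exists_mem_of_ne_nil S hS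
  have hne : ((fun c => ‖x - c‖ ^ 2) '' {c | c ∈ S}).Nonempty := ⟨_, a, ha, rfl⟩
  have hfin : ((fun c => ‖x - c‖ ^ 2) '' {c | c ∈ S}).Finite := S.finite_toSet.image _
  obtain ⟨c, hc, h⟩ := hne.csInf_mem hfin
  exact ⟨c, hc, h.symm⟩

theorem ptCost_cons_le (x c : EuclideanSpace ℝ (Fin d)) {S : List (EuclideanSpace ℝ (Fin d))}
    (hS : S ≠ []) :
    ptCost x (c :: S) ≤ ptCost x S := by
  obtain ⟨a, ha, h⟩ := exists_ptCost_eq x hS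
  rw [h]
  exact ptCost_le (List.mem_cons_of_mem _ ha)

theorem setCost_nonneg (X : Finset (EuclideanSpace ℝ (Fin d)))
    (S : List (EuclideanSpace ℝ (Fin d))) : 0 ≤ setCost X S :=
  Finset.sum_nonneg fun x _ => ptCost_nonneg x S

theorem setCost_cons_le (X : Finset (EuclideanSpace ℝ (Fin d))) (c : EuclideanSpace ℝ (Fin d))
    {S : List (EuclideanSpace ℝ (Fin d))} (hS : S ≠ []) :
    setCost X (c :: S) ≤ setCost X S :=
  Finset.sum_le_sum fun x _ => ptCost_cons_le x c hS

theorem setCost_cons_le_sum (X : Finset (EuclideanSpace ℝ (Fin d))) (c : EuclideanSpace ℝ (Fin d))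
    (S : List (EuclideanSpace ℝ (Fin d))) :
    setCost X (c :: S) ≤ ∑ x ∈ X, ‖x - c‖ ^ 2 :=
  Finset.sum_le_sum fun _ _ => ptCost_le List.mem_cons_self

theorem sum_sum_sqDist_le (A : Finset (EuclideanSpace ℝ (Fin d))) (c : EuclideanSpace ℝ (Fin d)) :
    ∑ x ∈ A, ∑ y ∈ A, ‖y - x‖ ^ 2 ≤ 2 * A.card * ∑ x ∈ A, ‖x - c‖ ^ 2 := by
  have key : ∀ x y : EuclideanSpace ℝ (Fin d), ‖y - x‖ ^ 2
      = ‖y - c‖ ^ 2 - 2 * inner ℝ (y - c) (x - c) + ‖x - c‖ ^ 2 := by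
    intro x y
    rw [← norm_sub_sq_real]
    congr 2
    abel
  have h : ∑ x ∈ A, ∑ y ∈ A, ‖y - x‖ ^ 2
      = 2 * A.card * ∑ x ∈ A, ‖x - c‖ ^ 2 - 2 * ‖∑ x ∈ A, (x - c)‖ ^ 2 := by
    have hin : ‖∑ x ∈ A, (x - c)‖ ^ 2 = ∑ x ∈ A, ∑ y ∈ A, inner ℝ (y - c) (x - c) := by
      rw [← real_inner_self_eq_norm_sq, inner_sum]
      exact Finset.sum_congr rfl fun x _ => sum_inner ..
    rw [hin, Finset.sum_congr rfl fun x _ => Finset.sum_congr rfl fun y _ => key x y]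
    simp only [Finset.sum_add_distrib, Finset.sum_sub_distrib, Finset.sum_const,
      nsmul_eq_mul, ← Finset.mul_sum]
    ring
  rw [h]
  have := sq_nonneg ‖∑ x ∈ A, (x - c)‖
  linarith

/-- Points of `A` sampled proportionally to their current cost bring the cost of `A` down to
a constant multiple of the all-pairs cost. -/
theorem sum_ptCost_mul_setCost_cons_le (A : Finset (EuclideanSpace ℝ (Fin d)))
    {S : List (EuclideanSpace ℝ (Fin d))} (hS : S ≠ []) {o : ℝ}
    (ho : ∑ x ∈ A, ∑ y ∈ A, ‖y - x‖ ^ 2 ≤ 2 * A.card * o) :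
    ∑ x ∈ A, ptCost x S * setCost A (x :: S) ≤ 8 * o * setCost A S := by
  rcases A.eq_empty_or_nonempty with rfl | hA
  · simp [setCost]
  have hn : (0 : ℝ) < A.card := by exact_mod_cast hA.card_pos
  have hpt : ∀ x y : EuclideanSpace ℝ (Fin d), ptCost x S ≤ 2 * ptCost y S + 2 * ‖y - x‖ ^ 2 := by
    intro x y
    obtain ⟨c, hc, h⟩ := exists_ptCost_eq y hS
    have h1 := ptCost_le (x := x) hc
    have h2 : ‖x - c‖ ≤ ‖y - c‖ + ‖y - x‖ := by
      have := norm_sub_le (y - c) (y - x)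
      rwa [sub_sub_sub_cancel_left] at this
    have h3 := norm_nonneg (x - c)
    rw [h]
    nlinarith [sq_nonneg (‖y - c‖ - ‖y - x‖)]
  have havg : ∀ x, A.card * ptCost x S ≤ 2 * setCost A S + 2 * ∑ y ∈ A, ‖y - x‖ ^ 2 := by
    intro x
    rw [setCost, Finset.mul_sum, Finset.mul_sum, ← Finset.sum_add_distrib, ← nsmul_eq_mul]
    exact Finset.card_nsmul_le_sum _ _ _ fun y _ => hpt x y
  have hterm : ∀ x ∈ A, A.card * (ptCost x S * setCost A (x :: S))
      ≤ 4 * setCost A S * ∑ y ∈ A, ‖y - x‖ ^ 2 := by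
    intro x _
    have h0 := setCost_nonneg A (x :: S)
    have h1 := setCost_cons_le A x hS
    have h2 := setCost_cons_le_sum A x S
    have h3 := setCost_nonneg A S
    have h4 : 0 ≤ ∑ y ∈ A, ‖y - x‖ ^ 2 := by positivity
    nlinarith [mul_le_mul_of_nonneg_right (havg x) h0, mul_le_mul_of_nonneg_left h2 h3,
      mul_le_mul_of_nonneg_left h1 h4]
  have hsum := Finset.sum_le_sum hterm
  rw [← Finset.mul_sum, ← Finset.mul_sum] at hsum
  have := mul_le_mul_of_nonneg_left ho (mul_nonneg zero_le_four (setCost_nonneg A S))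
  refine le_of_mul_le_mul_left ?_ hn
  linarith

theorem stepWeight_nonneg (X : Finset (EuclideanSpace ℝ (Fin d))) {δ : ℝ} (h0 : 0 ≤ δ) (h1 : δ ≤ 1)
    (S : List (EuclideanSpace ℝ (Fin d))) (x : EuclideanSpace ℝ (Fin d)) :
    0 ≤ stepWeight X δ S x := by
  have := ptCost_nonneg x S
  have := setCost_nonneg X S
  have : 0 ≤ 1 - δ := by linarith
  unfold stepWeight
  positivity

theorem sum_stepWeight (X A : Finset (EuclideanSpace ℝ (Fin d))) (δ : ℝ)
    (S : List (EuclideanSpace ℝ (Fin d))) :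
    ∑ x ∈ A, stepWeight X δ S x
      = (1 - δ) * setCost A S / setCost X S + δ * (A.card / X.card) := by
  simp only [stepWeight, Finset.sum_add_distrib, Finset.sum_const, nsmul_eq_mul,
    ← Finset.sum_div, ← Finset.mul_sum]
  rw [← setCost]
  ring

theorem sum_stepWeight_le_one {X : Finset (EuclideanSpace ℝ (Fin d))} (hX : X.Nonempty) {δ : ℝ}
    (h1 : δ ≤ 1)
    (S : List (EuclideanSpace ℝ (Fin d))) : ∑ x ∈ X, stepWeight X δ S x ≤ 1 := by
  have hn : (X.card : ℝ) ≠ 0 := by exact_mod_cast hX.card_ne_zero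
  rw [sum_stepWeight, div_self hn, mul_div_assoc]
  have := div_self_le_one (setCost X S)
  nlinarith

theorem expCost_le_setCost {X : Finset (EuclideanSpace ℝ (Fin d))} (hX : X.Nonempty) {δ : ℝ}
    (h0 : 0 ≤ δ) (h1 : δ ≤ 1)
    (t : ℕ) {S : List (EuclideanSpace ℝ (Fin d))} (hS : S ≠ []) :
    expCost X δ t S ≤ setCost X S := by
  induction t generalizing S with
  | zero => exact le_rfl
  | succ t ih =>
    rw [expCost]
    calc ∑ x ∈ X, stepWeight X δ S x * expCost X δ t (x :: S)
        ≤ ∑ x ∈ X, stepWeight X δ S x * setCost X S :=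
          Finset.sum_le_sum fun x _ => mul_le_mul_of_nonneg_left
            ((ih (List.cons_ne_nil x S)).trans (setCost_cons_le X x hS))
            (stepWeight_nonneg X h0 h1 S x)
      _ = (∑ x ∈ X, stepWeight X δ S x) * setCost X S := (Finset.sum_mul ..).symm
      _ ≤ setCost X S := mul_le_of_le_one_left (setCost_nonneg X S)
          (sum_stepWeight_le_one hX h1 S)

/-- The weighted form of the cluster contraction for the perturbed sampling distribution. -/
theorem sum_stepWeight_mul_setCost_cons_le (X A : Finset (EuclideanSpace ℝ (Fin d))) {δ : ℝ}
    (h0 : 0 ≤ δ) (h1 : δ ≤ 1)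
    {S : List (EuclideanSpace ℝ (Fin d))} (hS : S ≠ []) {o : ℝ} (h_o : 0 ≤ o)
    (ho : ∑ x ∈ A, ∑ y ∈ A, ‖y - x‖ ^ 2 ≤ 2 * A.card * o) :
    ∑ x ∈ A, stepWeight X δ S x * setCost A (x :: S)
      ≤ (∑ x ∈ A, stepWeight X δ S x) * (8 * o) := by
  have e : ∑ x ∈ A, stepWeight X δ S x * setCost A (x :: S)
      = (1 - δ) / setCost X S * ∑ x ∈ A, ptCost x S * setCost A (x :: S)
        + δ / X.card * ∑ x ∈ A, setCost A (x :: S) := by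
    rw [Finset.mul_sum, Finset.mul_sum, ← Finset.sum_add_distrib]
    refine Finset.sum_congr rfl fun x _ => ?_
    rw [stepWeight]
    ring
  have hd : 0 ≤ (1 - δ) / setCost X S := div_nonneg (by linarith) (setCost_nonneg X S)
  have hu : 0 ≤ δ / X.card := by positivity
  have hD := mul_le_mul_of_nonneg_left (sum_ptCost_mul_setCost_cons_le A hS ho) hd
  have hU : ∑ x ∈ A, setCost A (x :: S) ≤ A.card * (8 * o) := by
    refine (Finset.sum_le_sum fun x _ => setCost_cons_le_sum A x S).trans (ho.trans ?_)
    have : 0 ≤ A.card * o := by positivity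
    linarith
  have hU := mul_le_mul_of_nonneg_left hU hu
  rw [e, sum_stepWeight]
  refine (add_le_add hD hU).trans (le_of_eq ?_)
  ring

/-- Bookkeeping of one sampling step: `W` is the hitting probability of each cluster, `Φ` its
current cost, `N` the uniform part of the hitting probability. -/
theorem sum_cover_le (C U : Finset ι) (hU : U ⊆ C) (Φ N : ι → ℝ) (hΦ : ∀ b, 0 ≤ Φ b)
    (hN : ∀ b, 0 ≤ N b) {δ : ℝ} (h0 : 0 ≤ δ) (h1 : δ ≤ 1) (hNs : ∑ b ∈ C, N b = δ)
    (hpos : 0 < ∑ b ∈ C, Φ b) {t : ℕ} (ht : t + 1 ≤ U.card) :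
    (∑ b ∈ C \ U, ((1 - δ) * Φ b / (∑ b ∈ C, Φ b) + N b)
        * (((U.card : ℝ) - t) / U.card * ∑ b ∈ U, Φ b))
      + ∑ b ∈ U, ((1 - δ) * Φ b / (∑ b ∈ C, Φ b) + N b)
        * (((U.card : ℝ) - 1 - t) / ((U.card : ℝ) - 1) * (∑ b ∈ U, Φ b - Φ b))
      ≤ (∑ b ∈ C \ U, Φ b) / (t + 1) + ((U.card : ℝ) - (t + 1)) / U.card * (∑ b ∈ U, Φ b)
        + δ * ∑ b ∈ C, Φ b := by
  have hsplit := Finset.sum_sdiff hU (f := Φ)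
  have hNsplit := Finset.sum_sdiff hU (f := N)
  have hcs := sq_sum_le_card_mul_sum_sq (s := U) (f := Φ)
  have hP : 0 ≤ ∑ b ∈ U, Φ b := Finset.sum_nonneg fun b _ => hΦ b
  have hQ : 0 ≤ ∑ b ∈ C \ U, Φ b := Finset.sum_nonneg fun b _ => hΦ b
  have ht' : (t : ℝ) + 1 ≤ U.card := by exact_mod_cast ht
  have hle : ∀ b ∈ U, Φ b ≤ ∑ b ∈ U, Φ b := fun b hb =>
    Finset.single_le_sum (fun i _ => hΦ i) hb
  set φ := ∑ b ∈ C, Φ b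
  set P := ∑ b ∈ U, Φ b
  set Q := ∑ b ∈ C \ U, Φ b
  set u : ℝ := (U.card : ℝ)
  set r : ℝ := (u - 1 - t) / (u - 1)
  have ht0 : (0 : ℝ) ≤ t := t.cast_nonneg
  have hu : 0 < u := by linarith
  have hru : r * (u - 1) = u - 1 - t := by
    rcases eq_or_ne (u - 1) 0 with h | h
    · have : (t : ℝ) = 0 := by linarith
      simp [h, this]
    · exact div_mul_cancel₀ _ h
  have hr0 : 0 ≤ r := div_nonneg (by linarith) (by linarith)
  have hr1 : r ≤ 1 := div_le_one_of_le₀ (by linarith) (by linarith)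
  have hrq : r ≤ (u - t) / u := by
    rw [le_div_iff₀ hu]
    linarith
  have hq0 : 0 ≤ (u - t) / u := hr0.trans hrq
  have hsq : r * ∑ b ∈ U, Φ b * (P - Φ b) ≤ (u - (t + 1)) / u * P ^ 2 := by
    have e : ∑ b ∈ U, Φ b * (P - Φ b) = P ^ 2 - ∑ b ∈ U, Φ b ^ 2 := by
      simp only [mul_sub, Finset.sum_sub_distrib, ← Finset.sum_mul, sq]
      rfl
    have h : ∑ b ∈ U, Φ b * (P - Φ b) ≤ (u - 1) / u * P ^ 2 := by
      rw [e, div_mul_eq_mul_div, le_div_iff₀ hu]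
      linarith
    refine (mul_le_mul_of_nonneg_left h hr0).trans (le_of_eq ?_)
    rw [← mul_assoc, ← mul_div_assoc, hru]
    ring
  have hunif : (∑ b ∈ C \ U, N b) * ((u - t) / u * P) + ∑ b ∈ U, N b * (r * (P - Φ b))
      ≤ δ * ((u - t) / u * P) := by
    rw [← hNs, ← hNsplit, add_mul, Finset.sum_mul U]
    gcongr with b hb
    · exact hN b
    · linarith [hle b hb]
    · linarith [hΦ b]
  have hD : (1 - δ) / φ * (Q * ((u - t) / u * P) + r * ∑ b ∈ U, Φ b * (P - Φ b))
      ≤ (1 - δ) * ((u - (t + 1)) / u * P + Q / u) := by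
    rw [div_mul_eq_mul_div, mul_div_assoc]
    refine mul_le_mul_of_nonneg_left ?_ (by linarith)
    rw [div_le_iff₀ hpos, ← hsplit]
    have : Q * ((u - t) / u * P) = (u - (t + 1)) / u * P * Q + Q / u * P := by
      field_simp
      ring
    rw [this]
    have : 0 ≤ Q / u * Q := by positivity
    linarith
  have hqP : (u - t) / u * P = (u - (t + 1)) / u * P + P / u := by
    field_simp
    ring
  have hPu : P / u ≤ φ := by
    rw [div_le_iff₀ hu]
    nlinarith
  have hQu : Q / u ≤ Q / (t + 1) := by gcongr
  have hQt : 0 ≤ Q / u := by positivity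
  have hlhs : (∑ b ∈ C \ U, ((1 - δ) * Φ b / φ + N b) * ((u - t) / u * P))
      + ∑ b ∈ U, ((1 - δ) * Φ b / φ + N b) * (r * (P - Φ b))
      = (1 - δ) / φ * (Q * ((u - t) / u * P) + r * ∑ b ∈ U, Φ b * (P - Φ b))
        + ((∑ b ∈ C \ U, N b) * ((u - t) / u * P) + ∑ b ∈ U, N b * (r * (P - Φ b))) := by
    have e1 : ∑ b ∈ C \ U, (1 - δ) * Φ b / φ = (1 - δ) / φ * Q := by
      rw [Finset.mul_sum]
      exact Finset.sum_congr rfl fun b _ => by ring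
    have e2 : ∑ b ∈ U, (1 - δ) * Φ b / φ * (r * (P - Φ b))
        = (1 - δ) / φ * (r * ∑ b ∈ U, Φ b * (P - Φ b)) := by
      rw [Finset.mul_sum, Finset.mul_sum]
      exact Finset.sum_congr rfl fun b _ => by ring
    rw [← Finset.sum_mul, Finset.sum_add_distrib, e1]
    simp only [add_mul (_ / φ), Finset.sum_add_distrib]
    rw [e2]
    ring
  rw [hlhs]
  have h5 : δ * (P / u) ≤ δ * φ := mul_le_mul_of_nonneg_left hPu h0
  have h6 : 0 ≤ δ * (Q / u) := mul_nonneg h0 hQt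
  rw [hqP] at hunif
  rw [hqP] at hD ⊢
  linarith

theorem setCost_eq_sum_fiber {X : Finset (EuclideanSpace ℝ (Fin d))} {C : Finset ι}
    {f : EuclideanSpace ℝ (Fin d) → ι} (hf : ∀ x ∈ X, f x ∈ C)
    (S : List (EuclideanSpace ℝ (Fin d))) : setCost X S = ∑ b ∈ C, setCost {x ∈ X | f x = b} S :=
  (Finset.sum_fiberwise_of_maps_to hf _).symm

/-- Expected cost after `t` sampling steps, when the clusters in `U` (at least `t` of them) are
still regarded as uncovered. -/
theorem expCost_le_of_uncovered {X : Finset (EuclideanSpace ℝ (Fin d))} (hX : X.Nonempty) {δ : ℝ}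
    (h0 : 0 ≤ δ)
    (h1 : δ ≤ 1) {C : Finset ι} {f : EuclideanSpace ℝ (Fin d) → ι} (hf : ∀ x ∈ X, f x ∈ C)
    {o : ι → ℝ}
    (h_o : ∀ b, 0 ≤ o b)
    (ho : ∀ b, ∑ x ∈ X with f x = b, ∑ y ∈ X with f y = b, ‖y - x‖ ^ 2
      ≤ 2 * (Finset.card {x ∈ X | f x = b} : ℝ) * o b)
    (t : ℕ) {S : List (EuclideanSpace ℝ (Fin d))} (hS : S ≠ []) {U : Finset ι} (hU : U ⊆ C)
    (ht : t ≤ U.card) :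
    expCost X δ t S
      ≤ (∑ b ∈ C \ U, setCost {x ∈ X | f x = b} S + 8 * ∑ b ∈ U, o b) * (1 + harmonic t)
        + ((U.card : ℝ) - t) / U.card * ∑ b ∈ U, setCost {x ∈ X | f x = b} S
        + δ * t * setCost X S := by
  induction t generalizing S U with
  | zero =>
    have h := Finset.sum_sdiff hU (f := fun b => setCost {x ∈ X | f x = b} S)
    have hO : 0 ≤ ∑ b ∈ U, o b := Finset.sum_nonneg fun b _ => h_o b
    rw [expCost, setCost_eq_sum_fiber hf, ← h]
    rcases U.eq_empty_or_nonempty with rfl | hne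
    · simp
    · have : (U.card : ℝ) ≠ 0 := by exact_mod_cast hne.card_ne_zero
      simp only [harmonic_zero, Rat.cast_zero, add_zero, mul_one, Nat.cast_zero, sub_zero,
        div_self this, one_mul, mul_zero, zero_mul]
      linarith
  | succ t ih =>
    have hH0 : (0 : ℝ) ≤ harmonic t := by
      exact_mod_cast (Finset.sum_nonneg fun i _ => by positivity : (0 : ℚ) ≤ harmonic t)
    have hHs : ((harmonic (t + 1) : ℚ) : ℝ) = harmonic t + 1 / (t + 1) := by
      rw [harmonic_succ]
      push_cast
      rw [one_div]
    have hΦ : ∀ b, 0 ≤ setCost {x ∈ X | f x = b} S := fun b => setCost_nonneg _ S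
    have hO : 0 ≤ ∑ b ∈ U, o b := Finset.sum_nonneg fun b _ => h_o b
    have hQ : 0 ≤ ∑ b ∈ C \ U, setCost {x ∈ X | f x = b} S := Finset.sum_nonneg fun b _ => hΦ b
    have hP : 0 ≤ ∑ b ∈ U, setCost {x ∈ X | f x = b} S := Finset.sum_nonneg fun b _ => hΦ b
    have ht' : (t : ℝ) + 1 ≤ U.card := by exact_mod_cast ht
    have ht0 : (0 : ℝ) ≤ t := t.cast_nonneg
    rcases (setCost_nonneg X S).eq_or_lt with hzero | hpos
    · refine (expCost_le_setCost hX h0 h1 _ hS).trans ?_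
      rw [← hzero, hHs]
      push_cast
      have : 0 ≤ ((U.card : ℝ) - (t + 1)) / U.card := div_nonneg (by linarith) (by linarith)
      positivity
    have hn : (X.card : ℝ) ≠ 0 := by exact_mod_cast hX.card_ne_zero
    set Φ : ι → ℝ := fun b => setCost {x ∈ X | f x = b} S
    set N : ι → ℝ := fun b => δ * ((Finset.card {x ∈ X | f x = b} : ℝ) / X.card) with hNdef
    set W : ι → ℝ := fun b => ∑ x ∈ X with f x = b, stepWeight X δ S x with hWdef
    have hφ : setCost X S = ∑ b ∈ C, Φ b := setCost_eq_sum_fiber hf S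
    have hW : ∀ b, W b = (1 - δ) * Φ b / (∑ b ∈ C, Φ b) + N b := fun b => by
      rw [← hφ]
      exact sum_stepWeight X _ δ S
    have hNs : ∑ b ∈ C, N b = δ := by
      simp only [hNdef]
      rw [← Finset.mul_sum, ← Finset.sum_div, ← Nat.cast_sum,
        ← Finset.card_eq_sum_card_fiberwise hf, div_self hn, mul_one]
    have hWs : ∑ b ∈ C, W b = 1 := by
      simp only [hWdef]
      rw [Finset.sum_fiberwise_of_maps_to hf, sum_stepWeight, div_self hn,
        mul_div_cancel_right₀ _ hpos.ne']
      ring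
    set B : ℝ := (∑ b ∈ C \ U, Φ b + 8 * ∑ b ∈ U, o b) * (1 + harmonic t)
      + δ * t * setCost X S with hB
    have hmono : ∀ (x : EuclideanSpace ℝ (Fin d)) b, setCost {x ∈ X | f x = b} (x :: S) ≤ Φ b :=
    fun x b =>
      setCost_cons_le _ x hS
    have hcov : ∀ b ∈ C \ U, ∑ x ∈ X with f x = b, stepWeight X δ S x * expCost X δ t (x :: S)
        ≤ W b * (B + ((U.card : ℝ) - t) / U.card * ∑ b ∈ U, Φ b) := by
      intro b _
      rw [Finset.sum_mul]
      refine Finset.sum_le_sum fun x _ =>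
        mul_le_mul_of_nonneg_left ?_ (stepWeight_nonneg X h0 h1 S x)
      have h := ih (List.cons_ne_nil x S) hU (by omega)
      have a1 : ∑ b ∈ C \ U, setCost {x ∈ X | f x = b} (x :: S) ≤ ∑ b ∈ C \ U, Φ b :=
        Finset.sum_le_sum fun b _ => hmono x b
      have a2 : ∑ b ∈ U, setCost {x ∈ X | f x = b} (x :: S) ≤ ∑ b ∈ U, Φ b :=
        Finset.sum_le_sum fun b _ => hmono x b
      have a3 := setCost_cons_le X x hS
      have a4 : 0 ≤ ((U.card : ℝ) - t) / U.card := div_nonneg (by linarith) (by linarith)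
      have b1 := mul_le_mul_of_nonneg_right a1 (by linarith : (0 : ℝ) ≤ 1 + harmonic t)
      have b2 := mul_le_mul_of_nonneg_left a2 a4
      have b3 := mul_le_mul_of_nonneg_left a3 (mul_nonneg h0 ht0)
      rw [hB]
      linarith
    have hunc : ∀ b ∈ U, ∑ x ∈ X with f x = b, stepWeight X δ S x * expCost X δ t (x :: S)
        ≤ W b * (B + ((U.card : ℝ) - 1 - t) / ((U.card : ℝ) - 1) * (∑ b ∈ U, Φ b - Φ b)) := by
      intro b hb
      have hcard : ((U.erase b).card : ℝ) = (U.card : ℝ) - 1 := by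
        rw [Finset.card_erase_of_mem hb, Nat.cast_sub (by omega), Nat.cast_one]
      have hr : 0 ≤ ((U.card : ℝ) - 1 - t) / ((U.card : ℝ) - 1) :=
        div_nonneg (by linarith) (by linarith)
      have hpt : ∀ x, expCost X δ t (x :: S)
          ≤ (B + ((U.card : ℝ) - 1 - t) / ((U.card : ℝ) - 1) * (∑ b ∈ U, Φ b - Φ b)
            - 8 * o b * (1 + harmonic t))
            + (1 + harmonic t) * setCost {x ∈ X | f x = b} (x :: S) := by
        intro x
        have h := ih (List.cons_ne_nil x S) ((U.erase_subset b).trans hU)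
          (by rw [Finset.card_erase_of_mem hb]; omega)
        have hsd : C \ U.erase b = insert b (C \ U) := by
          rw [Finset.sdiff_erase (hU hb)]
        rw [hcard, hsd, Finset.sum_insert (by simp [hb])] at h
        have a1 : ∑ b ∈ C \ U, setCost {x ∈ X | f x = b} (x :: S) ≤ ∑ b ∈ C \ U, Φ b :=
          Finset.sum_le_sum fun b _ => hmono x b
        have a2 : ∑ b ∈ U.erase b, setCost {x ∈ X | f x = b} (x :: S) ≤ ∑ b ∈ U, Φ b - Φ b := by
          rw [← Finset.sum_erase_eq_sub hb]
          exact Finset.sum_le_sum fun b _ => hmono x b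
        have a3 := setCost_cons_le X x hS
        rw [Finset.sum_erase_eq_sub hb (f := o)] at h
        have b1 := mul_le_mul_of_nonneg_right a1 (by linarith : (0 : ℝ) ≤ 1 + harmonic t)
        have b2 := mul_le_mul_of_nonneg_left a2 hr
        have b3 := mul_le_mul_of_nonneg_left a3 (mul_nonneg h0 ht0)
        rw [hB]
        linarith
      have hc := sum_stepWeight_mul_setCost_cons_le X {x ∈ X | f x = b} h0 h1 hS (h_o b) (ho b)
      have hc := mul_le_mul_of_nonneg_left hc (by linarith : (0 : ℝ) ≤ 1 + harmonic t)
      refine (Finset.sum_le_sum fun x _ =>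
        mul_le_mul_of_nonneg_left (hpt x) (stepWeight_nonneg X h0 h1 S x)).trans ?_
      simp only [mul_add (stepWeight X δ S _), Finset.sum_add_distrib, ← Finset.sum_mul,
        mul_left_comm (stepWeight X δ S _), ← Finset.mul_sum]
      simp only [hWdef]
      linarith
    have hkey := sum_cover_le C U hU Φ N hΦ (fun b => by positivity) h0 h1 hNs (hφ ▸ hpos) ht
    simp only [← hW] at hkey
    have htot : expCost X δ (t + 1) S
        = ∑ b ∈ C \ U, ∑ x ∈ X with f x = b, stepWeight X δ S x * expCost X δ t (x :: S)
          + ∑ b ∈ U, ∑ x ∈ X with f x = b, stepWeight X δ S x * expCost X δ t (x :: S) := by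
      rw [Finset.sum_sdiff hU, Finset.sum_fiberwise_of_maps_to hf, expCost]
    have hWB : ∑ b ∈ C \ U, W b * B + ∑ b ∈ U, W b * B = B := by
      rw [Finset.sum_sdiff hU, ← Finset.sum_mul, hWs, one_mul]
    have hall := add_le_add (Finset.sum_le_sum hcov) (Finset.sum_le_sum hunc)
    rw [← htot] at hall
    simp only [mul_add (W _), Finset.sum_add_distrib] at hall
    have hOt : 0 ≤ (∑ b ∈ U, o b) * (1 / ((t : ℝ) + 1)) := by positivity
    rw [← hφ] at hkey
    rw [hHs]
    push_cast
    rw [hB] at hWB hall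
    simp only [div_eq_mul_one_div (∑ b ∈ C \ U, Φ b)] at hkey
    linarith

end

theorem expCost_cons_eq_zero_of_subsingleton {d : ℕ} [Subsingleton (EuclideanSpace ℝ (Fin d))]
    (X : Finset (EuclideanSpace ℝ (Fin d))) (δ : ℝ) (t : ℕ) (c : EuclideanSpace ℝ (Fin d))
    (S : List (EuclideanSpace ℝ (Fin d))) : expCost X δ t (c :: S) = 0 := by
  induction t generalizing c S with
  | zero =>
    refine Finset.sum_eq_zero fun x _ => le_antisymm ?_ (ptCost_nonneg x _)
    refine (ptCost_le (c := c) List.mem_cons_self).trans ?_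
    simp [Subsingleton.elim x c]
  | succ t ih => simp [expCost, ih]

theorem mean_expCost_le_setCost {d : ℕ} {X C : Finset (EuclideanSpace ℝ (Fin d))}
    (hX : X.Nonempty) (hC : C.Nonempty) {δ : ℝ} (h0 : 0 ≤ δ) (h1 : δ ≤ 1)
    (m : EuclideanSpace ℝ (Fin d)) :
    (X.card : ℝ)⁻¹ * ∑ c ∈ X, expCost X δ (C.card - 1) [c]
      ≤ 8 * (Real.log C.card + 2) * setCost X C.toList
        + 2 * C.card * δ * ∑ x ∈ X, ‖x - m‖ ^ 2 := by
  classical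
  have hne : C.toList ≠ [] := by simpa using hC.ne_empty
  choose f hfC hfeq using fun x => exists_ptCost_eq x hne
  have hf : ∀ x ∈ X, f x ∈ C := fun x _ => Finset.mem_toList.1 (hfC x)
  let o : EuclideanSpace ℝ (Fin d) → ℝ := fun b => ∑ x ∈ X with f x = b, ‖x - b‖ ^ 2
  have h_o : ∀ b, 0 ≤ o b := fun b => Finset.sum_nonneg fun x _ => by positivity
  have ho : ∀ b, ∑ x ∈ X with f x = b, ∑ y ∈ X with f y = b, ‖y - x‖ ^ 2
      ≤ 2 * (Finset.card {x ∈ X | f x = b} : ℝ) * o b := fun b => sum_sum_sqDist_le _ b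
  have hopt : setCost X C.toList = ∑ b ∈ C, o b := by
    rw [setCost_eq_sum_fiber hf]
    refine Finset.sum_congr rfl fun b _ => Finset.sum_congr rfl fun x hx => ?_
    rw [hfeq, (Finset.mem_filter.1 hx).2]
  have hn : (0 : ℝ) < X.card := by exact_mod_cast hX.card_pos
  have hk : 1 ≤ C.card := hC.card_pos
  have hH0 : (0 : ℝ) ≤ harmonic (C.card - 1) := by
    exact_mod_cast (Finset.sum_nonneg fun i _ => by positivity : (0 : ℚ) ≤ harmonic (C.card - 1))
  have hH : (harmonic (C.card - 1) : ℝ) ≤ 1 + Real.log C.card := by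
    refine (harmonic_le_one_add_log _).trans ?_
    rcases Nat.eq_zero_or_pos (C.card - 1) with h | h
    · rw [h]
      simpa using Real.log_natCast_nonneg C.card
    · gcongr
      exact Nat.sub_le _ _
  set H : ℝ := (harmonic (C.card - 1) : ℝ)
  have hstart : ∀ b ∈ C, ∀ c, expCost X δ (C.card - 1) [c]
      ≤ (setCost {x ∈ X | f x = b} [c] + 8 * (∑ b ∈ C, o b - o b)) * (1 + H)
        + δ * C.card * setCost X [c] := by
    intro b hb c
    have hcard : (C.erase b).card = C.card - 1 := Finset.card_erase_of_mem hb
    have h := expCost_le_of_uncovered hX h0 h1 hf h_o ho (C.card - 1) (List.cons_ne_nil c [])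
      (C.erase_subset b) hcard.ge
    rw [hcard, sub_self, zero_div, zero_mul, add_zero, Finset.sum_erase_eq_sub hb,
      Finset.sdiff_erase hb, Finset.sdiff_self, Finset.sum_insert (by simp), Finset.sum_empty,
      add_zero] at h
    refine h.trans ?_
    have : ((C.card - 1 : ℕ) : ℝ) ≤ C.card := by exact_mod_cast Nat.sub_le _ _
    have := setCost_nonneg X [c]
    gcongr
  have hcell : ∀ b ∈ C, ∑ c ∈ X with f c = b, expCost X δ (C.card - 1) [c]
      ≤ (Finset.card {x ∈ X | f x = b} : ℝ) * (8 * (∑ b ∈ C, o b) * (1 + H))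
        + δ * C.card * ∑ c ∈ X with f c = b, setCost X [c] := by
    intro b hb
    refine (Finset.sum_le_sum fun c _ => hstart b hb c).trans ?_
    have h := (Finset.sum_le_sum fun c (_ : c ∈ X.filter (f · = b)) =>
      setCost_cons_le_sum {x ∈ X | f x = b} c []).trans (ho b)
    have h := mul_le_mul_of_nonneg_right h (by linarith : 0 ≤ 1 + H)
    have h' : 0 ≤ (Finset.card {x ∈ X | f x = b} : ℝ) * o b * (1 + H) :=
      mul_nonneg (mul_nonneg (Nat.cast_nonneg _) (h_o b)) (by linarith)
    simp only [add_mul, Finset.sum_add_distrib, ← Finset.sum_mul, ← Finset.mul_sum,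
      Finset.sum_const, nsmul_eq_mul]
    linarith
  have hall := Finset.sum_le_sum hcell
  rw [Finset.sum_fiberwise_of_maps_to hf, Finset.sum_add_distrib, ← Finset.sum_mul,
    ← Finset.mul_sum, Finset.sum_fiberwise_of_maps_to hf, ← Nat.cast_sum,
    ← Finset.card_eq_sum_card_fiberwise hf, ← hopt] at hall
  have hvar : ∑ c ∈ X, setCost X [c] ≤ 2 * X.card * ∑ x ∈ X, ‖x - m‖ ^ 2 :=
    (Finset.sum_le_sum fun c _ => setCost_cons_le_sum X c []).trans (sum_sum_sqDist_le X m)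
  have hvar := mul_le_mul_of_nonneg_left hvar (mul_nonneg h0 (Nat.cast_nonneg C.card))
  have hlog := mul_le_mul_of_nonneg_left hH
    (mul_nonneg hn.le (setCost_nonneg X C.toList))
  rw [inv_mul_le_iff₀ hn]
  linarith

/-- Guarantee of `δ`-`k`-means++ (first center uniform, subsequent centers via
the `δ`-perturbed `D²` distribution):
`E[Δ(X,S)] ≤ 8(ln k + 2)·Δ_k(X) + (6kδ/(1-δ))·Δ₁(X)`. -/
theorem delta_kmeanspp_guarantee {d : ℕ} (X : Finset (EuclideanSpace ℝ (Fin d)))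
    (hX : X.Nonempty) (k : ℕ) (hk : 1 ≤ k)
    (δ : ℝ) (hδ₀ : 0 < δ) (hδ₁ : δ < 1 / 2) :
    (X.card : ℝ)⁻¹ * ∑ c ∈ X, expCost X δ (k - 1) [c]
      ≤ 8 * (Real.log k + 2) * optCost X k
        + (6 * k * δ / (1 - δ)) * ∑ x ∈ X, ‖x - (X.card : ℝ)⁻¹ • ∑ y ∈ X, y‖ ^ 2 := by
  have hlog : 0 < 8 * (Real.log k + 2) := by
    have := Real.log_natCast_nonneg k
    linarith
  have hcoef : 2 * k * δ ≤ 6 * k * δ / (1 - δ) := by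
    rw [le_div_iff₀ (by linarith)]
    have : 0 ≤ k * δ := by positivity
    nlinarith
  have hvar : 0 ≤ ∑ x ∈ X, ‖x - (X.card : ℝ)⁻¹ • ∑ y ∈ X, y‖ ^ 2 := by positivity
  rcases Nat.eq_zero_or_pos d with rfl | hd
  · have hopt : 0 ≤ optCost X k := by
      refine Real.sInf_nonneg ?_
      rintro _ ⟨C, -, -, rfl⟩
      exact setCost_nonneg X _
    have hsub : Subsingleton (EuclideanSpace ℝ (Fin 0)) := inferInstance
    simp only [expCost_cons_eq_zero_of_subsingleton, Finset.sum_const_zero, mul_zero]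
    have : 0 ≤ 2 * k * δ := by positivity
    exact add_nonneg (mul_nonneg hlog.le hopt) (mul_nonneg (this.trans hcoef) hvar)
  · have : NeZero d := ⟨hd.ne'⟩
    have : Infinite (EuclideanSpace ℝ (Fin d)) := Module.Free.infinite ℝ _
    rw [← sub_le_iff_le_add, ← div_le_iff₀' hlog]
    refine le_csInf ?_ ?_
    · obtain ⟨C, hC⟩ := Infinite.exists_subset_card_eq (EuclideanSpace ℝ (Fin d)) k
      exact ⟨_, C, Finset.card_pos.1 (by omega), hC, rfl⟩
    · rintro _ ⟨C, hC, rfl, rfl⟩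
      rw [div_le_iff₀' hlog, sub_le_iff_le_add]
      refine (mean_expCost_le_setCost hX hC hδ₀.le (by linarith)
        ((X.card : ℝ)⁻¹ • ∑ y ∈ X, y)).trans ?_
      gcongr
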